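/- arXiv:2007.14123 — 2 statements merged into one kernel-verified Lean document; each statement's English description precedes it below -/
import Mathlib

section
/- Let R be a finite commutative chain ring of nilpotency index e with residue field F_q, and let n be a positive integer with gcd(n,q)=1. The number of nonsingular n×n circulant matrices over R equals q^{(e-1)n} times the number of nonsingular n×n circulant matrices over F_q, i.e., q^{en} ∏_{d|n} (1 - q^{-ord_d(q)})^{φ(d)/ord_d(q)}. -/
theorem aux_card_quot {R : Type*} [CommRing R] [Finite R] [IsLocalRing R]
    (γ : R) (hγ : Ideal.span {γ} = IsLocalRing.maximalIdeal R)
    (q e : ℕ) (hq : Nat.card (R ⧸ IsLocalRing.maximalIdeal R) = q)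
    (he' : γ ^ (e - 1) ≠ 0) (j : ℕ) (hj : j ≤ e) :
    Nat.card (R ⧸ (Ideal.span {γ ^ j} : Ideal R)) = q ^ j := by
  induction j with
  | zero =>
    have : Subsingleton (R ⧸ (Ideal.span {γ ^ 0} : Ideal R)) := by
      rw [Ideal.Quotient.subsingleton_iff]; simp
    simp only [pow_zero] at this ⊢
    exact Nat.card_unique
  | succ j ih =>
    have hle : (Ideal.span {γ ^ (j+1)} : Ideal R) ≤ Ideal.span {γ ^ j} := by
      rw [Ideal.span_singleton_le_span_singleton]
      exact pow_dvd_pow _ (Nat.le_succ j)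
    rw [← Submodule.card_quotient_mul_card_quotient _ _ hle, ih (by omega), pow_succ q, mul_comm]
    congr 1
    rw [← hq]
    let T : Ideal R := Ideal.span {γ ^ (j+1)}
    let f : R →ₗ[R] R ⧸ T := (Submodule.mkQ T).comp (LinearMap.mulLeft R (γ ^ j))
    have hker : LinearMap.ker f = IsLocalRing.maximalIdeal R := by
      ext r
      have h1 : r ∈ LinearMap.ker f ↔ γ ^ (j+1) ∣ γ ^ j * r := by
        rw [LinearMap.mem_ker, ← Ideal.mem_span_singleton]
        change Submodule.Quotient.mk (p := T) (γ ^ j * r) = 0 ↔ _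
        rw [Submodule.Quotient.mk_eq_zero]
      rw [h1]
      constructor
      · rintro ⟨s, hs⟩
        by_contra hr
        have hu : IsUnit r := by simpa using hr
        have hm : γ * s ∈ IsLocalRing.maximalIdeal R := by
          rw [← hγ]; exact Ideal.mul_mem_right _ _ (Ideal.mem_span_singleton_self γ)
        have hu2 : IsUnit (r - γ * s) := by
          by_contra h
          apply hr
          have := Ideal.add_mem _ ((IsLocalRing.mem_maximalIdeal _).2 h) hm
          simpa using this
        have h0 : γ ^ j * (r - γ * s) = 0 := by rw [mul_sub, hs]; ring
        have : γ ^ j = 0 := by rwa [hu2.mul_left_eq_zero] at h0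
        exact he' (pow_eq_zero_of_le (by omega) this)
      · intro hr
        rw [← hγ, Ideal.mem_span_singleton] at hr
        rw [pow_succ]
        exact mul_dvd_mul_left _ hr
    have hrange : LinearMap.range f = Submodule.map (Submodule.mkQ T) (Ideal.span {γ ^ j} : Ideal R) := by
      rw [LinearMap.range_comp]
      congr 1
      ext x
      rw [LinearMap.mem_range, Ideal.mem_span_singleton]
      exact ⟨fun ⟨y, hy⟩ => ⟨y, hy.symm⟩, fun ⟨y, hy⟩ => ⟨y, hy.symm⟩⟩
    have := Nat.card_congr f.quotKerEquivRange.toEquiv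
    rw [hker, hrange] at this
    exact this.symm

theorem aux_card_max {R : Type*} [CommRing R] [Finite R] [IsLocalRing R]
    (γ : R) (hγ : Ideal.span {γ} = IsLocalRing.maximalIdeal R)
    (q e : ℕ) (hq : Nat.card (R ⧸ IsLocalRing.maximalIdeal R) = q)
    (he : γ ^ e = 0) (he' : γ ^ (e - 1) ≠ 0) :
    Nat.card (IsLocalRing.maximalIdeal R) = q ^ (e - 1) := by
  have h1 := aux_card_quot γ hγ q e hq he' e le_rfl
  have he0 : e ≠ 0 := by rintro rfl; simp at he
  rw [he] at h1
  have h2 : Nat.card (R ⧸ (Ideal.span {(0:R)} : Ideal R)) = Nat.card R := by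
    rw [Submodule.card_eq_card_quotient_mul_card (Ideal.span {(0:R)} : Ideal R)]
    simp
  rw [h2, Submodule.card_eq_card_quotient_mul_card (IsLocalRing.maximalIdeal R), hq] at h1
  have : Finite (R ⧸ IsLocalRing.maximalIdeal R) :=
    Finite.of_surjective _ (Ideal.Quotient.mk_surjective (I := IsLocalRing.maximalIdeal R))
  have hq0 : 0 < q := hq ▸ Nat.card_pos
  apply Nat.eq_of_mul_eq_mul_right hq0
  rw [h1, ← pow_succ]
  congr 1; omega

theorem aux_isUnit_iff {R : Type*} [CommRing R] [IsLocalRing R] (n : ℕ) [NeZero n]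
    (v : ZMod n → R) :
    IsUnit (Matrix.circulant v).det ↔
    IsUnit (Matrix.circulant (fun i => Ideal.Quotient.mk (IsLocalRing.maximalIdeal R) (v i))).det := by
  have : (Matrix.circulant (fun i => Ideal.Quotient.mk (IsLocalRing.maximalIdeal R) (v i))).det
      = IsLocalRing.residue R (Matrix.circulant v).det := by
    rw [RingHom.map_det]
    rfl
  rw [this]
  exact (isUnit_map_iff (IsLocalRing.residue R) _).symm

theorem aux_first {R : Type*} [CommRing R] [Finite R] [IsLocalRing R]
    (n : ℕ) [NeZero n] :
    Nat.card {v : ZMod n → R // IsUnit (Matrix.circulant v).det} =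
      Nat.card (IsLocalRing.maximalIdeal R) ^ n *
        Nat.card {w : ZMod n → R ⧸ IsLocalRing.maximalIdeal R //
          IsUnit (Matrix.circulant w).det} := by
  let m := IsLocalRing.maximalIdeal R
  have hout : ∀ x : R ⧸ m, Ideal.Quotient.mk m (Quotient.out x) = x := fun x => Quotient.out_eq x
  let E : {v : ZMod n → R // IsUnit (Matrix.circulant v).det} ≃
      (ZMod n → m) × {w : ZMod n → R ⧸ m // IsUnit (Matrix.circulant w).det} :=
    { toFun := fun v => (fun i => ⟨v.1 i - Quotient.out (Ideal.Quotient.mk m (v.1 i)), by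
          rw [← Ideal.Quotient.eq, hout]⟩,
        ⟨fun i => Ideal.Quotient.mk m (v.1 i), (aux_isUnit_iff n v.1).1 v.2⟩)
      invFun := fun p => ⟨fun i => (p.1 i : R) + Quotient.out (p.2.1 i), by
          rw [aux_isUnit_iff]
          convert p.2.2 using 4 with i
          rw [map_add, hout, Ideal.Quotient.eq_zero_iff_mem.2 (p.1 i).2, zero_add]⟩
      left_inv := fun v => by ext i; simp
      right_inv := fun p => by
        have h : ∀ i, Ideal.Quotient.mk m ((p.1 i : R) + Quotient.out (p.2.1 i)) = p.2.1 i := by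
          intro i
          rw [map_add, hout, Ideal.Quotient.eq_zero_iff_mem.2 (p.1 i).2, zero_add]
        ext i
        · simp only [h]; simp
        · exact h i }
  rw [Nat.card_congr E, Nat.card_prod, Nat.card_fun, Nat.card_zmod]

section
open Polynomial

noncomputable def aux_N {F : Type*} [Field F] (f : F[X]) : ℕ :=
  Nat.card (F[X] ⧸ (Ideal.span {f} : Ideal F[X]))ˣ

theorem aux_N_one {F : Type*} [Field F] : aux_N (1 : F[X]) = 1 := by
  unfold aux_N
  have : Subsingleton (F[X] ⧸ (Ideal.span {1} : Ideal F[X])) := by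
    rw [Ideal.Quotient.subsingleton_iff]; simp
  exact Nat.card_unique

theorem aux_N_mul {F : Type*} [Field F] (f g : F[X]) (h : IsCoprime f g) :
    aux_N (f * g) = aux_N f * aux_N g := by
  unfold aux_N
  rw [← Ideal.span_singleton_mul_span_singleton]
  rw [Nat.card_congr ((Units.mapEquiv (Ideal.quotientMulEquivQuotientProd _ _
    ((Ideal.isCoprime_span_singleton_iff f g).2 h)).toMulEquiv).trans MulEquiv.prodUnits).toEquiv,
    Nat.card_prod]

theorem aux_N_prod {F ι : Type*} [Field F] (s : Finset ι) (f : ι → F[X])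
    (h : (s : Set ι).Pairwise fun i j => IsCoprime (f i) (f j)) :
    aux_N (∏ i ∈ s, f i) = ∏ i ∈ s, aux_N (f i) := by
  classical
  induction s using Finset.induction_on with
  | empty => simp [aux_N_one]
  | insert a s ha ih =>
    rw [Finset.prod_insert ha, Finset.prod_insert ha, aux_N_mul, ih]
    · exact h.mono (by simp)
    · refine IsCoprime.prod_right fun i hi => h (by simp) (by simp [hi]) ?_
      rintro rfl; exact ha hi

theorem aux_N_irr {F : Type*} [Field F] [Fintype F] (f : F[X]) (h : Irreducible f) :
    aux_N f = Fintype.card F ^ f.natDegree - 1 := by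
  have : Fact (Irreducible f) := ⟨h⟩
  have hfin := (AdjoinRoot.powerBasis h.ne_zero).finite
  have : Finite (AdjoinRoot f) := Module.finite_of_finite F
  change Nat.card (AdjoinRoot f)ˣ = _
  rw [Nat.card_units, Module.natCard_eq_pow_finrank (K := F),
    (AdjoinRoot.powerBasis h.ne_zero).finrank, AdjoinRoot.powerBasis_dim, Nat.card_eq_fintype_card]

theorem aux_N_cyc {F : Type*} [Field F] [Fintype F] (d : ℕ)
    (hd : Nat.Coprime d (Fintype.card F)) :
    aux_N (cyclotomic d F) = (Fintype.card F ^ orderOf (Fintype.card F : ZMod d) - 1) ^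
      (Nat.totient d / orderOf (Fintype.card F : ZMod d)) := by
  classical
  obtain ⟨p, _, f, hp, hc⟩ := FiniteField.card' F
  have : Fact p.Prime := ⟨hp⟩
  have hpd : p.Coprime d := by
    rw [hc] at hd
    exact (Nat.coprime_pow_right_iff f.pos _ _).1 hd |>.symm
  have hord : orderOf (ZMod.unitOfCoprime _ (hpd.pow_left f)) =
      orderOf (Fintype.card F : ZMod d) := by
    rw [← orderOf_units, ZMod.coe_unitOfCoprime, hc]
  have hcard := normalizedFactors_cyclotomic_card hc hpd
  have hNZ : NeZero (d : F) := by
    refine ⟨fun H ↦ ?_⟩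
    have := charP_of_card_eq_prime_pow hc
    exact hp.coprime_iff_not_dvd.mp hpd ((CharP.cast_eq_zero_iff F p _).mp H)
  have hsq := squarefree_cyclotomic d F
  have hnd := (UniqueFactorizationMonoid.squarefree_iff_nodup_normalizedFactors
    (cyclotomic_ne_zero d F)).1 hsq
  have hprod := UniqueFactorizationMonoid.prod_normalizedFactors_eq (cyclotomic_ne_zero d F)
  rw [(cyclotomic.monic d F).normalize_eq_self] at hprod
  set S := UniqueFactorizationMonoid.normalizedFactors (cyclotomic d F) with hS
  have hprod' : ∏ P ∈ S.toFinset, P = cyclotomic d F := by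
    rw [← hprod, Finset.prod_eq_multiset_prod, Multiset.toFinset_val, hnd.dedup, Multiset.map_id']
  rw [← hprod', aux_N_prod]
  · rw [Finset.prod_congr rfl (g := fun _ => Fintype.card F ^ orderOf (Fintype.card F : ZMod d) - 1),
      Finset.prod_const, hcard, hord]
    intro P hP
    rw [Multiset.mem_toFinset] at hP
    rw [aux_N_irr P (UniqueFactorizationMonoid.irreducible_of_normalized_factor P hP),
      natDegree_of_mem_normalizedFactors_cyclotomic hc hpd hP, hord]
  · intro P hP Q hQ hne
    rw [Finset.mem_coe, Multiset.mem_toFinset] at hP hQ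
    have hPi := UniqueFactorizationMonoid.irreducible_of_normalized_factor P hP
    have hQi := UniqueFactorizationMonoid.irreducible_of_normalized_factor Q hQ
    rw [hPi.coprime_iff_not_dvd]
    intro hdvd
    apply hne
    have := (hPi.associated_of_dvd hQi hdvd)
    rw [← UniqueFactorizationMonoid.normalize_normalized_factor P hP,
      ← UniqueFactorizationMonoid.normalize_normalized_factor Q hQ]
    exact normalize_eq_normalize_iff_associated.2 this

theorem aux_N_X {F : Type*} [Field F] [Fintype F] (n : ℕ) [NeZero n]
    (hd : Nat.Coprime n (Fintype.card F)) :
    aux_N (X ^ n - 1 : F[X]) = ∏ d ∈ n.divisors,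
      (Fintype.card F ^ orderOf (Fintype.card F : ZMod d) - 1) ^
      (Nat.totient d / orderOf (Fintype.card F : ZMod d)) := by
  have hn0 : (n : F) ≠ 0 := by
    obtain ⟨p, _, f, hp, hc⟩ := FiniteField.card' F
    have : Fact p.Prime := ⟨hp⟩
    have hpd : p.Coprime n := by
      rw [hc] at hd
      exact (Nat.coprime_pow_right_iff f.pos _ _).1 hd |>.symm
    intro H
    have := charP_of_card_eq_prime_pow hc
    exact hp.coprime_iff_not_dvd.mp hpd ((CharP.cast_eq_zero_iff F p _).mp H)
  have hsep := X_pow_sub_one_separable_iff.2 hn0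
  rw [← prod_cyclotomic_eq_X_pow_sub_one (NeZero.pos n)] at hsep ⊢
  rw [aux_N_prod]
  · refine Finset.prod_congr rfl fun d hdn => aux_N_cyc d ?_
    exact Nat.Coprime.coprime_dvd_left (Nat.dvd_of_mem_divisors hdn) hd
  · intro i hi j hj hij
    have h2 : cyclotomic i F * cyclotomic j F ∣ ∏ d ∈ n.divisors, cyclotomic d F := by
      rw [← Finset.prod_pair hij (f := fun d => cyclotomic d F)]
      exact Finset.prod_dvd_prod_of_subset _ _ _ (by
        intro x hx
        simp only [Finset.mem_insert, Finset.mem_singleton] at hx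
        rcases hx with rfl | rfl
        · exact hi
        · exact hj)
    exact (hsep.of_dvd h2).isCoprime

theorem aux_circ {F : Type*} [Field F] (n : ℕ) [NeZero n] :
    Nat.card {w : ZMod n → F // IsUnit (Matrix.circulant w).det} = aux_N (X ^ n - 1 : F[X]) := by
  change _ = Nat.card (AdjoinRoot (X ^ n - 1 : F[X]))ˣ
  have hmon : (X ^ n - 1 : F[X]).Monic := monic_X_pow_sub_C 1 (NeZero.ne n)
  have hdeg : (X ^ n - 1 : F[X]).natDegree = n := natDegree_X_pow_sub_C (r := (1 : F))
  set A := AdjoinRoot (X ^ n - 1 : F[X])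
  let pb := AdjoinRoot.powerBasis' hmon
  let eqv : Fin (X ^ n - 1 : F[X]).natDegree ≃ ZMod n :=
    (finCongr hdeg).trans (ZMod.finEquiv n).toEquiv
  let b : Module.Basis (ZMod n) F A := pb.basis.reindex eqv
  let x : A := AdjoinRoot.root _
  have hx : x ^ n = 1 := by
    have h := AdjoinRoot.eval₂_root (X ^ n - 1 : F[X])
    simpa [sub_eq_zero] using h
  have hval : ∀ i : ZMod n, ((ZMod.finEquiv n).symm i : ℕ) = i.val := by
    obtain ⟨k, rfl⟩ := Nat.exists_eq_succ_of_ne_zero (NeZero.ne n)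
    intro i; rfl
  have hb : ∀ i, b i = x ^ i.val := by
    intro i
    refine (pb.basis.reindex_apply eqv i).trans ((pb.basis_eq_pow _).trans ?_)
    change x ^ _ = x ^ _
    congr 1
    exact hval i
  have hbm : ∀ i j, b i * b j = b (i + j) := by
    intro i j
    rw [hb, hb, hb, ← pow_add, ZMod.val_add]
    exact pow_eq_pow_mod _ hx
  have key : ∀ w : ZMod n → F, Algebra.leftMulMatrix b (b.equivFun.symm w) = Matrix.circulant w := by
    intro w
    ext i j
    rw [Algebra.leftMulMatrix_eq_repr_mul, Module.Basis.equivFun_symm_apply, Finset.sum_mul]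
    simp only [smul_mul_assoc, hbm, map_sum, map_smul, Module.Basis.repr_self, Finsupp.coe_finsetSum,
      Finset.sum_apply, Finsupp.smul_apply, Finsupp.single_apply, Matrix.circulant_apply]
    rw [Finset.sum_eq_single (i - j)]
    · simp
    · intro k _ hk
      rw [if_neg]; · simp
      rintro rfl; simp at hk
    · simp
  have hfin : Module.Finite F A := pb.finite
  have hu : ∀ w : ZMod n → F, IsUnit (Matrix.circulant w).det ↔ IsUnit (b.equivFun.symm w) := by
    intro w
    rw [← key, ← Algebra.norm_eq_matrix_det, Algebra.norm_apply,
      ← LinearMap.isUnit_iff_isUnit_det, Algebra.lmul_isUnit_iff]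
  rw [Nat.card_congr (b.equivFun.symm.toEquiv.subtypeEquiv (q := fun a => IsUnit a) hu)]
  exact Nat.card_congr (Equiv.ofBijective (fun a => a.2.unit)
    ⟨fun a a' h => Subtype.ext (by simpa using congrArg Units.val h),
      fun u => ⟨⟨u, u.isUnit⟩, by ext; simp⟩⟩)

end

/-- Over a commutative finite chain ring `R` of nilpotency index `e` with residue field of size
`q`, and `gcd(n,q) = 1`, the number of nonsingular `n × n` circulant matrices over `R` equals
`q^((e-1)n)` times the number of nonsingular `n × n` circulant matrices over the residue field,
i.e. `q^((e-1)n) · ∏_{d ∣ n} (q^(ord_d q) - 1)^(φ(d)/ord_d q)`. -/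
theorem card_nonsingular_circulant_chainRing {R : Type*} [CommRing R] [Finite R] [IsLocalRing R]
    (hchain : ∀ I J : Ideal R, I ≤ J ∨ J ≤ I)
    (γ : R) (hγ : Ideal.span {γ} = IsLocalRing.maximalIdeal R)
    (q e n : ℕ) (hq : Nat.card (R ⧸ IsLocalRing.maximalIdeal R) = q)
    (he : γ ^ e = 0) (he' : γ ^ (e - 1) ≠ 0)
    [NeZero n] (hgcd : Nat.gcd n q = 1) :
    Nat.card {v : ZMod n → R // IsUnit (Matrix.circulant v).det} =
      q ^ ((e - 1) * n) *
        Nat.card {w : ZMod n → R ⧸ IsLocalRing.maximalIdeal R //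
          IsUnit (Matrix.circulant w).det} ∧
    Nat.card {v : ZMod n → R // IsUnit (Matrix.circulant v).det} =
      q ^ ((e - 1) * n) * ∏ d ∈ n.divisors,
        (q ^ orderOf (q : ZMod d) - 1) ^ (Nat.totient d / orderOf (q : ZMod d)) := by
  have hm := aux_card_max γ hγ q e hq he he'
  have h1 := aux_first (R := R) n
  rw [hm, ← pow_mul] at h1
  refine ⟨h1, ?_⟩
  rw [h1]
  congr 1
  letI : Field (R ⧸ IsLocalRing.maximalIdeal R) :=
    Ideal.Quotient.field (IsLocalRing.maximalIdeal R)
  haveI : Finite (R ⧸ IsLocalRing.maximalIdeal R) :=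
    Finite.of_surjective _ (Ideal.Quotient.mk_surjective (I := IsLocalRing.maximalIdeal R))
  letI := Fintype.ofFinite (R ⧸ IsLocalRing.maximalIdeal R)
  rw [Nat.card_eq_fintype_card] at hq
  have h2 := aux_N_X (F := R ⧸ IsLocalRing.maximalIdeal R) n (by rw [hq]; exact hgcd)
  rw [hq] at h2
  rw [← h2]
  exact aux_circ (F := R ⧸ IsLocalRing.maximalIdeal R) n
end

section
/- Let R be a finite commutative chain ring of nilpotency index e with residue field F_q, and let n be a positive integer with gcd(n,q)=1. For every unit a of R, the number of n×n circulant matrices over R with determinant a equals q^{e(n-1)} ∏_{d|n, d≠1} (1 - q^{-ord_d(q)})^{φ(d)/ord_d(q)}. -/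
open Polynomial Matrix

lemma card_isUnit_eq (M : Type*) [Monoid M] : Nat.card {x : M // IsUnit x} = Nat.card Mˣ :=
  (Nat.card_congr (Equiv.ofBijective (fun u : Mˣ => (⟨u, u.isUnit⟩ : {x : M // IsUnit x}))
    ⟨fun _ _ h => Units.ext (congrArg Subtype.val h), fun x => ⟨x.2.unit, rfl⟩⟩)).symm

lemma units_card_prod {K : Type*} [Field K] {ι : Type*} (s : Finset ι) (f : ι → K[X])
    (h : ∀ i ∈ s, ∀ j ∈ s, i ≠ j → IsCoprime (f i) (f j)) :
    Nat.card (AdjoinRoot (∏ i ∈ s, f i))ˣ = ∏ i ∈ s, Nat.card (AdjoinRoot (f i))ˣ := by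
  classical
  have hI : (⨅ i : s, Ideal.span {f i}) = Ideal.span {∏ i ∈ s, f i} := by
    rw [Ideal.iInf_span_singleton, Finset.prod_coe_sort s f]
    intro i j hij
    exact h i i.2 j j.2 (fun h => hij (Subtype.ext h))
  have e1 : (K[X] ⧸ (⨅ i : s, Ideal.span {f i})) ≃+* ((i : s) → K[X] ⧸ Ideal.span {f i}) :=
    Ideal.quotientInfRingEquivPiQuotient _ (fun i j hij =>
      (Ideal.isCoprime_span_singleton_iff _ _).2 (h i i.2 j j.2 (fun h => hij (Subtype.ext h))))
  have e2 : AdjoinRoot (∏ i ∈ s, f i) ≃+* ((i : s) → AdjoinRoot (f i)) :=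
    (Ideal.quotEquivOfEq hI.symm).trans e1
  rw [Nat.card_congr (Units.mapEquiv e2.toMulEquiv).toEquiv, Nat.card_congr MulEquiv.piUnits.toEquiv,
    Nat.card_pi, Finset.prod_coe_sort s (fun i => Nat.card (AdjoinRoot (f i))ˣ)]

lemma units_card_irred {K : Type*} [Field K] [Finite K] (f : K[X]) (hf : Irreducible f) :
    Nat.card (AdjoinRoot f)ˣ = Nat.card K ^ f.natDegree - 1 := by
  have : Fact (Irreducible f) := ⟨hf⟩
  let pb := AdjoinRoot.powerBasis hf.ne_zero
  have : Module.Finite K (AdjoinRoot f) := pb.finite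
  rw [Nat.card_units, Module.natCard_eq_pow_finrank (K := K), pb.finrank,
    AdjoinRoot.powerBasis_dim]

lemma units_card_cyclotomic {K : Type*} [Field K] [Finite K] (n : ℕ) [NeZero n]
    (hn : n.Coprime (Nat.card K)) :
    Nat.card (AdjoinRoot (cyclotomic n K))ˣ =
      (Nat.card K ^ orderOf (Nat.card K : ZMod n) - 1) ^
        (Nat.totient n / orderOf (Nat.card K : ZMod n)) := by
  classical
  have := Fintype.ofFinite K
  obtain ⟨p, hp⟩ := CharP.exists K
  obtain ⟨f, hpp, hK⟩ := FiniteField.card K p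
  have : Fact p.Prime := ⟨hpp⟩
  have hK' : Nat.card K = p ^ (f : ℕ) := by rw [Nat.card_eq_fintype_card, hK]
  have hpn : p.Coprime n := by
    rw [hK'] at hn
    exact (Nat.Coprime.coprime_dvd_right (dvd_pow_self p f.pos.ne') hn).symm
  have hord : orderOf (Nat.card K : ZMod n) =
      orderOf (ZMod.unitOfCoprime _ (hpn.pow_left f)) := by
    rw [← orderOf_units, ZMod.coe_unitOfCoprime, hK']
  have hnK : (n : K) ≠ 0 := by
    intro h0
    have := (CharP.cast_eq_zero_iff K p n).1 h0
    exact hpp.one_lt.ne' (Nat.Coprime.eq_one_of_dvd hpn this)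
  have : NeZero (n : K) := ⟨hnK⟩
  have hsq : Squarefree (cyclotomic n K) := squarefree_cyclotomic n K
  have hnd := (UniqueFactorizationMonoid.squarefree_iff_nodup_normalizedFactors
    (cyclotomic_ne_zero n K)).1 hsq
  set S := UniqueFactorizationMonoid.normalizedFactors (cyclotomic n K) with hS
  have hprod : ∏ P ∈ S.toFinset, P = cyclotomic n K := by
    rw [Finset.prod, Multiset.toFinset_val, hnd.dedup, Multiset.map_id']
    rw [hS, UniqueFactorizationMonoid.prod_normalizedFactors_eq (cyclotomic_ne_zero n K)]
    exact (cyclotomic.monic n K).normalize_eq_self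
  have hirr : ∀ P ∈ S.toFinset, Irreducible P := fun P hP =>
    UniqueFactorizationMonoid.irreducible_of_normalized_factor P (Multiset.mem_toFinset.1 hP)
  have hco : ∀ P ∈ S.toFinset, ∀ Q ∈ S.toFinset, P ≠ Q → IsCoprime (id P) (id Q) := by
    intro P hP Q hQ hne
    refine ((hirr P hP).coprime_iff_not_dvd).2 fun hd => hne ?_
    have ha := (hirr P hP).associated_of_dvd (hirr Q hQ) hd
    rw [← UniqueFactorizationMonoid.normalize_normalized_factor P (Multiset.mem_toFinset.1 hP),
      ← UniqueFactorizationMonoid.normalize_normalized_factor Q (Multiset.mem_toFinset.1 hQ)]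
    exact normalize_eq_normalize_iff_associated.2 ha
  have key : Nat.card (AdjoinRoot (cyclotomic n K))ˣ =
      ∏ P ∈ S.toFinset, Nat.card (AdjoinRoot P)ˣ := by
    have := units_card_prod S.toFinset id hco
    have h2 : ∏ P ∈ S.toFinset, id P = cyclotomic n K := hprod
    generalize ∏ P ∈ S.toFinset, id P = g at this h2
    subst h2
    exact this
  rw [key, hord, ← Polynomial.normalizedFactors_cyclotomic_card hK hpn, ← Finset.prod_const]
  refine Finset.prod_congr rfl fun P hP => ?_
  rw [units_card_irred P (hirr P hP),
    Polynomial.natDegree_of_mem_normalizedFactors_cyclotomic hK hpn (Multiset.mem_toFinset.1 hP)]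

lemma units_card_X_pow_sub_one {K : Type*} [Field K] [Finite K] (n : ℕ) [NeZero n]
    (hn : n.Coprime (Nat.card K)) :
    Nat.card (AdjoinRoot (X ^ n - 1 : K[X]))ˣ = ∏ d ∈ n.divisors,
      (Nat.card K ^ orderOf (Nat.card K : ZMod d) - 1) ^
        (Nat.totient d / orderOf (Nat.card K : ZMod d)) := by
  classical
  have := Fintype.ofFinite K
  have hnK : (n : K) ≠ 0 := by
    obtain ⟨p, hp⟩ := CharP.exists K
    obtain ⟨f, hpp, hK⟩ := FiniteField.card K p
    intro h0
    have := (CharP.cast_eq_zero_iff K p n).1 h0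
    rw [Nat.card_eq_fintype_card, hK] at hn
    have h2 := (Nat.Coprime.coprime_dvd_right (dvd_pow_self p f.pos.ne') hn).symm
    exact hpp.one_lt.ne' (Nat.Coprime.eq_one_of_dvd h2 this)
  have hsep := X_pow_sub_one_separable_iff.2 hnK
  rw [← prod_cyclotomic_eq_X_pow_sub_one (NeZero.pos n) K] at hsep ⊢
  rw [units_card_prod]
  · refine Finset.prod_congr rfl fun d hd => ?_
    have : NeZero d := ⟨(Nat.pos_of_mem_divisors hd).ne'⟩
    exact units_card_cyclotomic d (hn.coprime_dvd_left (Nat.dvd_of_mem_divisors hd))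
  · intro i hi j hj hij
    have : cyclotomic i K * cyclotomic j K ∣ ∏ d ∈ n.divisors, cyclotomic d K := by
      rw [← Finset.prod_pair (f := fun d => cyclotomic d K) hij]
      exact Finset.prod_dvd_prod_of_subset _ _ _ (by simp [Finset.insert_subset_iff] at *; tauto)
    exact (hsep.of_dvd this).isCoprime

lemma card_unit_circulant_field {K : Type*} [Field K] (n : ℕ) [NeZero n] :
    Nat.card {v : ZMod n → K // IsUnit (Matrix.circulant v).det} =
    Nat.card (AdjoinRoot (X ^ n - 1 : K[X]))ˣ := by
  classical
  have hm : (X ^ n - 1 : K[X]).Monic := monic_X_pow_sub_C 1 (NeZero.ne n)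
  let pb := AdjoinRoot.powerBasis' hm
  have hdim : pb.dim = n := by
    rw [AdjoinRoot.powerBasis'_dim]; exact natDegree_X_pow_sub_C
  let b : Module.Basis (ZMod n) K (AdjoinRoot (X ^ n - 1 : K[X])) :=
    pb.basis.reindex ((finCongr hdim).trans (ZMod.finEquiv n).toEquiv)
  set r := AdjoinRoot.root (X ^ n - 1 : K[X]) with hr
  have hrn : r ^ n = 1 := by
    have := AdjoinRoot.eval₂_root (X ^ n - 1 : K[X])
    simpa [sub_eq_zero] using this
  have hval : ∀ i : ZMod n, ((ZMod.finEquiv n).symm i : ℕ) = i.val := by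
    intro i
    cases n with
    | zero => exact (NeZero.ne 0 rfl).elim
    | succ m => rfl
  have hb : ∀ i, b i = r ^ i.val := by
    intro i
    simp [b, pb, hr]
    exact congrArg _ (hval i)
  have hmul : ∀ i j, b i * b j = b (i + j) := by
    intro i j
    rw [hb, hb, hb, ← pow_add, ZMod.val_add, ← pow_eq_pow_mod _ hrn]
  have hmat : ∀ v : ZMod n → K, Algebra.leftMulMatrix b (b.equivFun.symm v) =
      Matrix.circulant v := by
    intro v
    ext i j
    rw [Algebra.leftMulMatrix_eq_repr_mul, Module.Basis.equivFun_symm_apply, Finset.sum_mul]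
    simp only [smul_mul_assoc, hmul, map_sum, map_smul, Module.Basis.repr_self, Finsupp.coe_finsetSum,
      Finset.sum_apply, Finsupp.smul_apply, Finsupp.single_apply, smul_eq_mul, Matrix.circulant_apply,
      mul_ite, mul_one, mul_zero, ← eq_sub_iff_add_eq]
    simp
  have hunit : ∀ v : ZMod n → K, IsUnit (Matrix.circulant v).det ↔
      IsUnit (b.equivFun.symm v) := by
    intro v
    have : Module.Finite K (AdjoinRoot (X ^ n - 1 : K[X])) := pb.finite
    rw [← hmat, ← Matrix.isUnit_iff_isUnit_det]
    constructor
    · intro h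
      obtain ⟨u, hu⟩ := h
      refine IsUnit.of_mul_eq_one (b.equivFun.symm ((↑u⁻¹ : Matrix _ _ K) *ᵥ b.repr 1)) ?_
      apply b.repr.injective
      ext i
      rw [← Algebra.leftMulMatrix_mulVec_repr, ← hu]
      have : (b.repr (b.equivFun.symm ((↑u⁻¹ : Matrix _ _ K) *ᵥ b.repr 1)) : ZMod n → K) =
          (↑u⁻¹ : Matrix _ _ K) *ᵥ b.repr 1 := by
        rw [← Module.Basis.equivFun_apply, LinearEquiv.apply_symm_apply]
      rw [this, Matrix.mulVec_mulVec, ← Units.val_mul, mul_inv_cancel, Units.val_one,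
        Matrix.one_mulVec]
    · exact fun h => h.map (Algebra.leftMulMatrix b)
  rw [Nat.card_congr (Equiv.subtypeEquiv b.equivFun.symm.toEquiv hunit)]
  exact card_isUnit_eq _

lemma natCast_ne_zero_of_coprime {K : Type*} [Field K] [Finite K] (n : ℕ)
    (hn : n.Coprime (Nat.card K)) : (n : K) ≠ 0 := by
  have := Fintype.ofFinite K
  obtain ⟨p, hp⟩ := CharP.exists K
  obtain ⟨f, hpp, hK⟩ := FiniteField.card K p
  intro h0
  have := (CharP.cast_eq_zero_iff K p n).1 h0
  rw [Nat.card_eq_fintype_card, hK] at hn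
  have h2 := (Nat.Coprime.coprime_dvd_right (dvd_pow_self p f.pos.ne') hn).symm
  exact hpp.one_lt.ne' (Nat.Coprime.eq_one_of_dvd h2 this)

lemma exists_circulant_det {R : Type*} [CommRing R] (n : ℕ) [NeZero n] (hn : IsUnit (n : R))
    (c : R) : ∃ w : ZMod n → R, (circulant w).det = c := by
  obtain ⟨u, hu⟩ := hn
  set t : R := (↑u⁻¹ : R) * (c - 1) with ht
  refine ⟨Pi.single 0 1 + fun _ => t, ?_⟩
  have : circulant (Pi.single 0 1 + fun _ => t : ZMod n → R) =
      1 + replicateCol Unit (fun _ : ZMod n => t) * replicateRow Unit (fun _ : ZMod n => (1 : R)) := by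
    rw [circulant_add, circulant_single_one]
    congr 1
    ext i j
    simp [Matrix.mul_apply]
  rw [this, det_one_add_replicateCol_mul_replicateRow]
  simp [dotProduct, ZMod.card]
  rw [ht, ← hu, ← mul_assoc]
  simp

lemma card_fiber_le {R : Type*} [CommRing R] [Finite R] (n : ℕ) [NeZero n]
    (hn : IsUnit (n : R)) (a b : Rˣ) :
    Nat.card {v : ZMod n → R // (circulant v).det = (a : R)} ≤
      Nat.card {v : ZMod n → R // (circulant v).det = (b : R)} := by
  obtain ⟨w, hw⟩ := exists_circulant_det n hn ((b * a⁻¹ : Rˣ) : R)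
  have hwu : IsUnit (circulant w) := by
    rw [Matrix.isUnit_iff_isUnit_det, hw]; exact Units.isUnit _
  refine Nat.card_le_card_of_injective
    (fun v => ⟨circulant w *ᵥ v.1, by
      rw [← circulant_mul, det_mul, hw, v.2]; simp⟩) ?_
  intro v v' h
  have := congrArg Subtype.val h
  exact Subtype.ext (Matrix.mulVec_injective_of_isUnit hwu this)

lemma card_fiber_mul {R : Type*} [CommRing R] [Finite R] (n : ℕ) [NeZero n]
    (hn : IsUnit (n : R)) (a : Rˣ) :
    Nat.card {v : ZMod n → R // (circulant v).det = (a : R)} * Nat.card Rˣ =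
      Nat.card {v : ZMod n → R // IsUnit (circulant v).det} := by
  have e : (Σ b : Rˣ, {v : ZMod n → R // (circulant v).det = (b : R)}) ≃
      {v : ZMod n → R // IsUnit (circulant v).det} :=
    { toFun := fun x => ⟨x.2.1, by rw [x.2.2]; exact Units.isUnit _⟩
      invFun := fun v => ⟨v.2.unit, v.1, rfl⟩
      left_inv := by
        rintro ⟨b, v, hv⟩
        refine Sigma.ext (Units.ext hv) ?_
        refine (Subtype.heq_iff_coe_eq fun w => ?_).2 rfl
        rw [IsUnit.unit_spec, hv]
      right_inv := fun v => rfl }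
  have := Fintype.ofFinite Rˣ
  rw [← Nat.card_congr e, Nat.card_sigma,
    Finset.sum_congr rfl fun b _ => le_antisymm (card_fiber_le n hn b a) (card_fiber_le n hn a b),
    Finset.sum_const, Finset.card_univ, smul_eq_mul, Nat.card_eq_fintype_card (α := Rˣ), mul_comm]

lemma card_preimage {G H : Type*} [AddCommGroup G] [AddCommGroup H] [Finite G] [Finite H]
    (F : G →+ H)
    (hF : Function.Surjective F) (T : H → Prop) :
    Nat.card {x // T (F x)} = Nat.card F.ker * Nat.card {y // T y} := by
  choose s hs using hF
  have e : {x // T (F x)} ≃ F.ker × {y // T y} :=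
    { toFun := fun x => (⟨x.1 - s (F x.1), by simp [AddMonoidHom.mem_ker, hs]⟩, ⟨F x.1, x.2⟩)
      invFun := fun p => ⟨p.1.1 + s p.2.1, by
        have := p.1.2
        rw [AddMonoidHom.mem_ker] at this
        rw [map_add, this, zero_add, hs]; exact p.2.2⟩
      left_inv := fun x => by simp
      right_inv := by
        rintro ⟨⟨k, hk⟩, y, hy⟩
        rw [AddMonoidHom.mem_ker] at hk
        simp [hk, hs] }
  rw [Nat.card_congr e, Nat.card_prod]

section
variable {R : Type*} [CommRing R] [Finite R] [IsLocalRing R]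

open IsLocalRing

lemma card_units_local : Nat.card Rˣ =
    Nat.card (maximalIdeal R) * (Nat.card (ResidueField R) - 1) := by
  have : Finite (ResidueField R) := Finite.of_surjective _ (residue_surjective (R := R))
  have h := card_preimage (residue R).toAddMonoidHom residue_surjective (fun y => y ≠ 0)
  have hker : Nat.card (residue R).toAddMonoidHom.ker = Nat.card (maximalIdeal R) := by
    refine Nat.card_congr (Equiv.subtypeEquivRight fun x => ?_)
    exact residue_eq_zero_iff x
  rw [hker] at h
  rw [← card_isUnit_eq, ← Nat.card_units, ← card_isUnit_eq]
  simp only [isUnit_iff_ne_zero (G₀ := ResidueField R)]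
  rw [← h]
  refine Nat.card_congr (Equiv.subtypeEquivRight fun x => ?_)
  exact (residue_ne_zero_iff_isUnit x).symm

lemma card_unit_circulant_local (n : ℕ) [NeZero n] :
    Nat.card {v : ZMod n → R // IsUnit (circulant v).det} =
    Nat.card (maximalIdeal R) ^ n *
      Nat.card {v : ZMod n → ResidueField R // IsUnit (circulant v).det} := by
  have : Finite (ResidueField R) := Finite.of_surjective _ (residue_surjective (R := R))
  let F : (ZMod n → R) →+ (ZMod n → ResidueField R) := (residue R).toAddMonoidHom.compLeft (ZMod n)
  have hF : Function.Surjective F := by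
    intro w
    choose s hs using (residue_surjective (R := R))
    exact ⟨fun i => s (w i), funext fun i => hs _⟩
  have hker : Nat.card F.ker = Nat.card (maximalIdeal R) ^ n := by
    have e : F.ker ≃ (ZMod n → maximalIdeal R) :=
      { toFun := fun v i => ⟨v.1 i, (residue_eq_zero_iff _).1 (congrFun v.2 i)⟩
        invFun := fun w => ⟨fun i => (w i).1, funext fun i => (residue_eq_zero_iff _).2 (w i).2⟩
        left_inv := fun v => rfl
        right_inv := fun v => rfl }
    rw [Nat.card_congr e, Nat.card_fun, Nat.card_zmod]
  rw [← hker, ← card_preimage F hF (fun v => IsUnit (circulant v).det)]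
  refine Nat.card_congr (Equiv.subtypeEquivRight fun v => ?_)
  have : circulant (F v) = (residue R).mapMatrix (circulant v) := rfl
  rw [this, ← RingHom.map_det, isUnit_map_iff]

lemma card_span_pow (γ : R) (hγ : Ideal.span {γ} = maximalIdeal R) (i : ℕ) (hi : γ ^ i ≠ 0) :
    Nat.card (Ideal.span {γ ^ i}) =
      Nat.card (R ⧸ maximalIdeal R) * Nat.card (Ideal.span {γ ^ (i + 1)}) := by
  let f : R →+ R := AddMonoidHom.mulLeft (γ ^ i)
  have h := AddSubgroup.relIndex_map_map f (maximalIdeal R).toAddSubgroup ⊤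
  have hk : f.ker ≤ (maximalIdeal R).toAddSubgroup := by
    intro x hx
    have hx : γ ^ i * x = 0 := hx
    change x ∈ maximalIdeal R
    rw [mem_maximalIdeal]
    intro hu
    exact hi ((hu.mul_left_eq_zero).1 hx)
  have h1 : AddSubgroup.map f ⊤ = (Ideal.span {γ ^ i}).toAddSubgroup := by
    ext x
    simp [f, Ideal.mem_span_singleton', mul_comm]
  have h2 : AddSubgroup.map f (maximalIdeal R).toAddSubgroup =
      (Ideal.span {γ ^ (i + 1)}).toAddSubgroup := by
    ext x
    rw [← hγ]
    simp only [f, AddSubgroup.mem_map, Submodule.mem_toAddSubgroup, Ideal.mem_span_singleton']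
    constructor
    · rintro ⟨_, ⟨c, rfl⟩, rfl⟩
      exact ⟨c, by simp; ring⟩
    · rintro ⟨c, rfl⟩
      exact ⟨_, ⟨c, rfl⟩, by simp; ring⟩
  rw [h1, h2, sup_eq_left.2 hk, top_sup_eq, AddSubgroup.relIndex_top_right] at h
  have hle : (Ideal.span {γ ^ (i + 1)}).toAddSubgroup ≤ (Ideal.span {γ ^ i}).toAddSubgroup := by
    rw [← h1, ← h2]; exact AddSubgroup.map_mono le_top
  have h3 := AddSubgroup.relIndex_mul_relIndex ⊥ _ _ bot_le hle
  rw [AddSubgroup.relIndex_bot_left, AddSubgroup.relIndex_bot_left, h] at h3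
  rw [mul_comm]
  exact h3.symm

lemma card_maximalIdeal (γ : R) (hγ : Ideal.span {γ} = maximalIdeal R) (e : ℕ)
    (he : γ ^ e = 0) (he' : γ ^ (e - 1) ≠ 0) :
    Nat.card (maximalIdeal R) = Nat.card (R ⧸ maximalIdeal R) ^ (e - 1) := by
  have he0 : e ≠ 0 := by rintro rfl; simp at he
  obtain ⟨m, rfl⟩ := Nat.exists_eq_succ_of_ne_zero he0
  simp only [Nat.succ_eq_add_one, Nat.add_sub_cancel] at *
  have key : ∀ j ≤ m, Nat.card (Ideal.span {γ ^ (m + 1 - j)}) =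
      Nat.card (R ⧸ maximalIdeal R) ^ j := by
    intro j
    induction j with
    | zero => intro _; simp [he]
    | succ j ih =>
      intro hj
      rw [card_span_pow γ hγ, show m + 1 - (j + 1) + 1 = m + 1 - j by omega,
        ih (by omega), pow_succ']
      intro h0
      exact he' (pow_eq_zero_of_le (by omega) h0)
  have := key m le_rfl
  rwa [Nat.add_sub_cancel_left, pow_one, hγ] at this

end

theorem card_circulant_det_unit_chainRing {R : Type*} [CommRing R] [Finite R] [IsLocalRing R]
    (hchain : ∀ I J : Ideal R, I ≤ J ∨ J ≤ I)
    (γ : R) (hγ : Ideal.span {γ} = IsLocalRing.maximalIdeal R)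
    (q e n : ℕ) (hq : Nat.card (R ⧸ IsLocalRing.maximalIdeal R) = q)
    (he : γ ^ e = 0) (he' : γ ^ (e - 1) ≠ 0)
    [NeZero n] (hgcd : Nat.gcd n q = 1) (a : Rˣ) :
    Nat.card {v : ZMod n → R // (Matrix.circulant v).det = (a : R)} =
      q ^ ((e - 1) * (n - 1)) * ∏ d ∈ n.divisors.erase 1,
        (q ^ orderOf (q : ZMod d) - 1) ^ (Nat.totient d / orderOf (q : ZMod d)) := by
  have hq' : Nat.card (IsLocalRing.ResidueField R) = q := hq
  have : Finite (IsLocalRing.ResidueField R) := Finite.of_surjective _ IsLocalRing.residue_surjective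
  have hq1 : 1 < q := by rw [← hq']; exact Finite.one_lt_card
  have hco : n.Coprime (Nat.card (IsLocalRing.ResidueField R)) := by rw [hq']; exact hgcd
  have hn : IsUnit (n : R) := by
    rw [← IsLocalRing.residue_ne_zero_iff_isUnit, map_natCast]
    exact natCast_ne_zero_of_coprime n hco
  have hM := card_maximalIdeal γ hγ e he he'
  rw [hq] at hM
  have h := card_fiber_mul n hn a
  rw [card_unit_circulant_local, card_units_local, card_unit_circulant_field,
    units_card_X_pow_sub_one n hco, hq', hM,
    ← Finset.mul_prod_erase _ _ (Nat.one_mem_divisors.2 (NeZero.ne n))] at h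
  have h1 : orderOf (q : ZMod 1) = 1 := by
    rw [orderOf_eq_one_iff]; exact Subsingleton.elim _ _
  rw [h1, Nat.totient_one, Nat.div_self one_pos, pow_one, pow_one] at h
  have hpos : 0 < q ^ (e - 1) * (q - 1) := Nat.mul_pos (pow_pos (by omega) _) (by omega)
  apply Nat.eq_of_mul_eq_mul_right hpos
  rw [h]
  obtain ⟨m, rfl⟩ := Nat.exists_eq_succ_of_ne_zero (NeZero.ne n)
  rw [Nat.succ_eq_add_one, Nat.add_sub_cancel, pow_succ, pow_mul]
  ring
end
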